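/- arXiv:2503.00298 — 2 statements merged into one kernel-verified Lean document; each statement's English description precedes it below -/
import Mathlib

section
/- Fix ℓ ≥ 1 and dimensions n₀, n₁, …, n_ℓ. For each l ∈ {1, …, ℓ} let W_l and Ŵ_l be n_l × n_{l−1} real matrices with ‖Ŵ_l‖_F ≤ ‖W_l‖_F. Let σ denote the coordinatewise ReLU map on each ℝ^{n_l}, and define the networks f(x) = W_ℓ σ(W_{ℓ−1} σ(⋯ W_2 σ(W_1 x))) and f̂(x) = Ŵ_ℓ σ(Ŵ_{ℓ−1} σ(⋯ Ŵ_2 σ(Ŵ_1 x))). Then for every x ∈ ℝ^{n₀} with ‖x‖ ≤ 1, ‖f(x) − f̂(x)‖ ≤ Σ_{l=1}^{ℓ} ( ‖W_l − Ŵ_l‖_F · Π_{l′=1, l′≠l}^{ℓ} ‖W_{l′}‖_F ). -/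
/-- The Frobenius norm of a real matrix. -/
noncomputable def frobNorm {m n : ℕ} (A : Matrix (Fin m) (Fin n) ℝ) : ℝ :=
  Real.sqrt (∑ i, ∑ j, (A i j) ^ 2)

/-- `net dims W k x` is the `(k+1)`-layer ReLU network
`W_{k+1} σ(W_k σ(⋯ W_2 σ(W_1 x)))` (with coordinatewise ReLU `σ` between layers and no
activation after the last layer), with weight matrices `W l : dims (l+1) × dims l`. -/
noncomputable def net (dims : ℕ → ℕ)
    (W : ∀ l : ℕ, Matrix (Fin (dims (l + 1))) (Fin (dims l)) ℝ) :
    (k : ℕ) → (Fin (dims 0) → ℝ) → (Fin (dims (k + 1)) → ℝ)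
  | 0 => fun x => (W 0).mulVec x
  | (k + 1) => fun x => (W (k + 1)).mulVec (fun i => max (net dims W k x i) 0)

lemma aux_mulVec {m n : ℕ} (A : Matrix (Fin m) (Fin n) ℝ) (v : Fin n → ℝ) :
    ‖WithLp.toLp 2 (A.mulVec v)‖ ≤ frobNorm A * ‖WithLp.toLp 2 v‖ := by
  have h0 : 0 ≤ ∑ i, ∑ j, (A i j) ^ 2 :=
    Finset.sum_nonneg fun i _ => Finset.sum_nonneg fun j _ => sq_nonneg _
  rw [EuclideanSpace.norm_eq, EuclideanSpace.norm_eq]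
  refine le_of_le_of_eq ?_ (Real.sqrt_mul h0 _)
  apply Real.sqrt_le_sqrt
  simp only [Real.norm_eq_abs, sq_abs]
  rw [Finset.sum_mul]
  apply Finset.sum_le_sum
  intro i _
  exact Finset.sum_mul_sq_le_sq_mul_sq Finset.univ (fun j => A i j) v

lemma aux_relu_sub {n : ℕ} (u v : Fin n → ℝ) :
    ‖WithLp.toLp 2 ((fun i => max (u i) 0) - (fun i => max (v i) 0))‖
      ≤ ‖WithLp.toLp 2 (u - v)‖ := by
  rw [EuclideanSpace.norm_eq, EuclideanSpace.norm_eq]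
  apply Real.sqrt_le_sqrt
  apply Finset.sum_le_sum
  intro i _
  simp only [Real.norm_eq_abs, Pi.sub_apply]
  exact pow_le_pow_left₀ (abs_nonneg _) (abs_max_sub_max_le_abs (u i) (v i) 0) 2

lemma aux_relu {n : ℕ} (u : Fin n → ℝ) :
    ‖WithLp.toLp 2 (fun i => max (u i) 0)‖ ≤ ‖WithLp.toLp 2 u‖ := by
  have h := aux_relu_sub u 0
  have e : ((fun i => max (u i) 0) - (fun i => max ((0 : Fin n → ℝ) i) 0))
      = fun i => max (u i) 0 := by
    ext i; simp
  rwa [e, sub_zero] at h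

lemma frobNorm_nonneg' {m n : ℕ} (A : Matrix (Fin m) (Fin n) ℝ) : 0 ≤ frobNorm A :=
  Real.sqrt_nonneg _

lemma aux_net (dims : ℕ → ℕ)
    (W : ∀ l : ℕ, Matrix (Fin (dims (l + 1))) (Fin (dims l)) ℝ)
    (x : Fin (dims 0) → ℝ) (hx : ‖WithLp.toLp 2 x‖ ≤ 1) (k : ℕ) :
    ‖WithLp.toLp 2 (net dims W k x)‖ ≤ ∏ l ∈ Finset.range (k + 1), frobNorm (W l) := by
  induction k with
  | zero =>
    simp only [net, zero_add, Finset.prod_range_one]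
    exact (aux_mulVec _ _).trans (mul_le_of_le_one_right (frobNorm_nonneg' _) hx)
  | succ k ih =>
    rw [Finset.prod_range_succ, mul_comm]
    exact (aux_mulVec _ _).trans
      (mul_le_mul_of_nonneg_left ((aux_relu _).trans ih) (frobNorm_nonneg' _))

lemma aux_main (dims : ℕ → ℕ)
    (W What : ∀ l : ℕ, Matrix (Fin (dims (l + 1))) (Fin (dims l)) ℝ)
    (x : Fin (dims 0) → ℝ) (hx : ‖WithLp.toLp 2 x‖ ≤ 1) (k : ℕ)
    (hprune : ∀ l ∈ Finset.range (k + 1), frobNorm (What l) ≤ frobNorm (W l)) :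
    ‖WithLp.toLp 2 (net dims W k x - net dims What k x)‖
      ≤ ∑ l ∈ Finset.range (k + 1),
          frobNorm (W l - What l)
            * ∏ l' ∈ (Finset.range (k + 1)).erase l, frobNorm (W l') := by
  induction k with
  | zero =>
    simp only [net, zero_add, Finset.sum_range_one, ← Matrix.sub_mulVec]
    simpa using (aux_mulVec _ _).trans (mul_le_of_le_one_right (frobNorm_nonneg' _) hx)
  | succ k ih =>
    have ih' := ih fun l hl => hprune l (by simp at hl ⊢; omega)
    have hk := hprune (k + 1) (by simp)
    rw [Finset.sum_range_succ]
    have e1 : (Finset.range (k + 1 + 1)).erase (k + 1) = Finset.range (k + 1) := by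
      ext a; simp; omega
    have e2 : ∑ l ∈ Finset.range (k + 1), frobNorm (W l - What l)
            * ∏ l' ∈ (Finset.range (k + 1 + 1)).erase l, frobNorm (W l')
        = frobNorm (W (k + 1)) * ∑ l ∈ Finset.range (k + 1), frobNorm (W l - What l)
            * ∏ l' ∈ (Finset.range (k + 1)).erase l, frobNorm (W l') := by
      rw [Finset.mul_sum]
      apply Finset.sum_congr rfl
      intro l hl
      have e3 : (Finset.range (k + 1 + 1)).erase l
          = insert (k + 1) ((Finset.range (k + 1)).erase l) := by
        ext a; simp at hl ⊢; omega
      rw [e3, Finset.prod_insert (by simp)]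
      ring
    rw [e1, e2]
    have e4 : net dims W (k + 1) x - net dims What (k + 1) x
        = (What (k + 1)).mulVec ((fun i => max (net dims W k x i) 0)
            - (fun i => max (net dims What k x i) 0))
          + (W (k + 1) - What (k + 1)).mulVec (fun i => max (net dims W k x i) 0) := by
      simp only [net, Matrix.mulVec_sub, Matrix.sub_mulVec]
      abel
    rw [e4, WithLp.toLp_add]
    refine (norm_add_le _ _).trans (add_le_add ?_ ?_)
    · exact (aux_mulVec _ _).trans (mul_le_mul hk ((aux_relu_sub _ _).trans ih')
        (norm_nonneg _) (frobNorm_nonneg' _))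
    · exact (aux_mulVec _ _).trans (mul_le_mul_of_nonneg_left
        ((aux_relu _).trans (aux_net dims W x hx k)) (frobNorm_nonneg' _))

/-- Lemma 2 (network perturbation bound): if each pruned weight matrix satisfies
`‖Ŵ_l‖_F ≤ ‖W_l‖_F`, then for every input with `‖x‖ ≤ 1`,
`‖f(x) − f̂(x)‖ ≤ Σ_l ‖W_l − Ŵ_l‖_F Π_{l′ ≠ l} ‖W_{l′}‖_F`, where `f, f̂` are the
`(k+1)`-layer ReLU networks (`ℓ = k + 1 ≥ 1` layers) with weights `W_l`, `Ŵ_l`. -/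
theorem stmt_4 (k : ℕ) (dims : ℕ → ℕ)
    (W What : ∀ l : ℕ, Matrix (Fin (dims (l + 1))) (Fin (dims l)) ℝ)
    (hprune : ∀ l ∈ Finset.range (k + 1), frobNorm (What l) ≤ frobNorm (W l))
    (x : EuclideanSpace ℝ (Fin (dims 0))) (hx : ‖x‖ ≤ 1) :
    ‖(WithLp.equiv 2 (Fin (dims (k + 1)) → ℝ)).symm
          (net dims W k ((WithLp.equiv 2 (Fin (dims 0) → ℝ)) x))
        - (WithLp.equiv 2 (Fin (dims (k + 1)) → ℝ)).symm
          (net dims What k ((WithLp.equiv 2 (Fin (dims 0) → ℝ)) x))‖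
      ≤ ∑ l ∈ Finset.range (k + 1),
          frobNorm (W l - What l)
            * ∏ l' ∈ (Finset.range (k + 1)).erase l, frobNorm (W l') := by
  exact aux_main dims W What _ hx k hprune
end

section
/- Define u : (0, 1) → ℝ by u(ρ) = 2 − ρ − ρ(log ρ − 1)² (natural logarithm). Let r : ℝ → ℝ be differentiable with derivative r′ nonnegative and monotone nondecreasing, and let T ≥ 0 and c ≥ 0 be constants. Then the function h(ρ) = T · r(u(ρ)) + c · ρ has a monotone nondecreasing derivative on (0, 1); in particular h is convex on (0, 1), so it has at most one interior local minimum (it is unimodal). -/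
/-- Theorem 1: with `u(ρ) = 2 − ρ − ρ(log ρ − 1)²`, a differentiable `r` whose derivative
is nonnegative and monotone nondecreasing, and constants `T, c ≥ 0`, the objective
`h(ρ) = T · r(u(ρ)) + c · ρ` has a monotone nondecreasing derivative on `(0, 1)`; in
particular it is convex on `(0, 1)`, so every local minimum on `(0, 1)` is a global
minimum there (the function is unimodal). -/
theorem stmt_11 (u : ℝ → ℝ) (hu : ∀ ρ, u ρ = 2 - ρ - ρ * (Real.log ρ - 1) ^ 2)
    (r : ℝ → ℝ) (hr : Differentiable ℝ r)
    (hr' : ∀ x, 0 ≤ deriv r x) (hr'mono : Monotone (deriv r))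
    (T c : ℝ) (hT : 0 ≤ T) (hc : 0 ≤ c)
    (h : ℝ → ℝ) (hh : ∀ ρ, h ρ = T * r (u ρ) + c * ρ) :
    MonotoneOn (deriv h) (Set.Ioo (0 : ℝ) 1)
      ∧ ConvexOn ℝ (Set.Ioo (0 : ℝ) 1) h
      ∧ ∀ x ∈ Set.Ioo (0 : ℝ) 1,
          IsLocalMinOn h (Set.Ioo (0 : ℝ) 1) x → IsMinOn h (Set.Ioo (0 : ℝ) 1) x := by
  have hud : ∀ x ∈ Set.Ioo (0 : ℝ) 1, HasDerivAt u (-(Real.log x) ^ 2) x := by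
    intro x hx
    have hx0 : x ≠ 0 := hx.1.ne'
    have hfun : u = fun ρ => 2 - ρ - ρ * (Real.log ρ - 1) ^ 2 := funext hu
    rw [hfun]
    have h1 := ((Real.hasDerivAt_log hx0).sub_const 1).pow 2
    have h2 := ((hasDerivAt_id' x).const_sub 2).sub ((hasDerivAt_id' x).mul h1)
    refine h2.congr_deriv ?_
    simp
    field_simp
    ring
  have hhd : ∀ x ∈ Set.Ioo (0 : ℝ) 1,
      HasDerivAt h (T * (deriv r (u x) * (-(Real.log x) ^ 2)) + c) x := by
    intro x hx
    have hfun : h = fun ρ => T * r (u ρ) + c * ρ := funext hh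
    rw [hfun]
    have h1 := ((hr (u x)).hasDerivAt.comp x (hud x hx)).const_mul T
    have h2 := h1.add ((hasDerivAt_id' x).const_mul c)
    rw [mul_one] at h2
    exact h2
  have hanti : AntitoneOn u (Set.Ioo (0 : ℝ) 1) := by
    apply antitoneOn_of_deriv_nonpos (convex_Ioo 0 1)
    · exact fun x hx => (hud x hx).continuousAt.continuousWithinAt
    · rw [interior_Ioo]
      exact fun x hx => (hud x hx).differentiableAt.differentiableWithinAt
    · rw [interior_Ioo]
      intro x hx
      rw [(hud x hx).deriv]
      have := sq_nonneg (Real.log x)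
      linarith
  have hmono : MonotoneOn (deriv h) (Set.Ioo (0 : ℝ) 1) := by
    intro x hx y hy hxy
    rw [(hhd x hx).deriv, (hhd y hy).deriv]
    have h1 : deriv r (u y) ≤ deriv r (u x) := hr'mono (hanti hx hy hxy)
    have h2 : Real.log x ≤ Real.log y := Real.log_le_log hx.1 hxy
    have h3 : Real.log y ≤ 0 := Real.log_nonpos hy.1.le hy.2.le
    have h4 : (Real.log y) ^ 2 ≤ (Real.log x) ^ 2 := by nlinarith
    have h5 := mul_le_mul h1 h4 (sq_nonneg _) (hr' _)
    have h6 := mul_le_mul_of_nonneg_left h5 hT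
    linarith
  have hconv : ConvexOn ℝ (Set.Ioo (0 : ℝ) 1) h := by
    apply MonotoneOn.convexOn_of_deriv (convex_Ioo 0 1)
    · exact fun x hx => (hhd x hx).continuousAt.continuousWithinAt
    · rw [interior_Ioo]
      exact fun x hx => (hhd x hx).differentiableAt.differentiableWithinAt
    · rw [interior_Ioo]
      exact hmono
  exact ⟨hmono, hconv, fun x hx hl => IsMinOn.of_isLocalMinOn_of_convexOn hx hl hconv⟩
end
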